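/- arXiv:2306.09136 — 2 statements merged into one kernel-verified Lean document; each statement's English description precedes it below -/
import Mathlib

section
/- Let K ≥ 2 be an integer, σ₀ > 0, and μ₀ ∈ ℝ^K. For each a ∈ {1,…,K}, let h_a(x) = (2πσ₀²)^{−1/2} exp(−(x−μ₀_a)²/(2σ₀²)). Then the sum over a ∈ {1,…,K} of the integral over θ_{−a} ∈ ℝ^{K−1} (with respect to the (K−1)-dimensional Lebesgue product measure over the coordinates a' ≠ a) of h_a(max_{a'≠a} θ_{a'}) · ∏_{a'≠a} h_{a'}(θ_{a'}) is at most (1/(2√(πσ₀²))) · ∑_{a=1}^{K} ∑_{a'≠a} exp(−(μ₀_a − μ₀_{a'})²/(4σ₀²)). -/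
/-!
The maximum over the finite nonempty index set is attained, so the nonnegative function `h a`
evaluated at the maximum is at most the sum of its values at all coordinates. After this union bound
each term is a product of one-variable functions. By Fubini, every coordinate except `b` integrates
to `1`, and coordinate `b` contributes `∫ h a * h b`. Completing the square shows that the product of
two Gaussian densities with variance `v` and means `m`, `n` is
`exp (-(m - n)² / (4 v)) / (2 √(π v))` times the Gaussian density with variance `v / 2` and mean
`(m + n) / 2`, so the union bound integrates to exactly the right-hand side.
-/

open Real MeasureTheory Finset

open ProbabilityTheory in
/-- Completing the square in the product of two Gaussian densities of equal variance. -/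
lemma gaussianPDFReal_mul_gaussianPDFReal (m n : ℝ) (v : NNReal) (hv : 0 < v) (x : ℝ) :
    gaussianPDFReal m v x * gaussianPDFReal n v x =
      (1 / (2 * √(π * v)) * rexp (-(m - n) ^ 2 / (4 * v))) *
        gaussianPDFReal ((m + n) / 2) (v / 2) x := by
  have hv' : (0 : ℝ) < v := hv
  have hp : 0 < π * v := by positivity
  have hc : (√(2 * π * v))⁻¹ * (√(2 * π * v))⁻¹ = 1 / (2 * √(π * v)) * (√(π * v))⁻¹ := by
    rw [← mul_inv, Real.mul_self_sqrt (by positivity), one_div, ← mul_inv, mul_assoc 2 (√(π * v)),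
      Real.mul_self_sqrt hp.le, mul_assoc]
  have he : rexp (-(x - m) ^ 2 / (2 * v)) * rexp (-(x - n) ^ 2 / (2 * v)) =
      rexp (-(m - n) ^ 2 / (4 * v)) * rexp (-(x - (m + n) / 2) ^ 2 / v) := by
    rw [← Real.exp_add, ← Real.exp_add]
    congr 1
    field_simp
    ring
  have h1 : 2 * π * ((v : ℝ) / 2) = π * v := by ring
  have h2 : 2 * ((v : ℝ) / 2) = v := by ring
  simp only [gaussianPDFReal, NNReal.coe_div, NNReal.coe_ofNat, h1, h2]
  linear_combination rexp (-(x - m) ^ 2 / (2 * v)) * rexp (-(x - n) ^ 2 / (2 * v)) * hc +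
    1 / (2 * √(π * v)) * (√(π * v))⁻¹ * he

/-- The union bound for one arm: `g` plays the role of the density of the arm whose coordinate is
left out, `f` lists the densities of the remaining arms. -/
lemma integral_iSup_mul_prod_le {ι : Type*} [Fintype ι] [Nonempty ι]
    (g : ℝ → ℝ) (f : ι → ℝ → ℝ) (hg : ∀ x, 0 ≤ g x) (hf : ∀ i x, 0 ≤ f i x)
    (hfi : ∀ i, Integrable (f i)) (hf1 : ∀ i, ∫ x, f i x = 1)
    (hgf : ∀ i, Integrable fun x => g x * f i x) :
    ∫ θ : ι → ℝ, g (⨆ i, θ i) * ∏ i, f i (θ i) ≤ ∑ i, ∫ x, g x * f i x := by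
  classical
  -- `F b` replaces the factor `f b` by `g * f b`, so that each union-bound term is a product.
  let F : ι → ι → ℝ → ℝ := fun b i x => if i = b then g x * f i x else f i x
  have hF : ∀ b (θ : ι → ℝ), ∏ i, F b i (θ i) = g (θ b) * ∏ i, f i (θ i) := by
    intro b θ
    have : ∀ i, F b i (θ i) = (if i = b then g (θ i) else 1) * f i (θ i) := by
      intro i
      by_cases h : i = b <;> simp [F, h]
    rw [Finset.prod_congr rfl fun i _ => this i, Finset.prod_mul_distrib]
    simp
  have hFi : ∀ b i, Integrable (F b i) := by
    intro b i
    by_cases h : i = b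
    · simpa [F, h] using hgf b
    · simpa [F, h] using hfi i
  have hFint : ∀ b, Integrable fun θ : ι → ℝ => ∏ i, F b i (θ i) :=
    fun b => Integrable.fintype_prod (hFi b)
  have hFval : ∀ b, ∫ θ : ι → ℝ, ∏ i, F b i (θ i) = ∫ x, g x * f b x := by
    intro b
    rw [integral_fintype_prod_volume_eq_prod]
    rw [Finset.prod_eq_single b]
    · simp [F]
    · intro i _ h
      simp [F, h, hf1]
    · simp
  calc ∫ θ : ι → ℝ, g (⨆ i, θ i) * ∏ i, f i (θ i)
      ≤ ∫ θ : ι → ℝ, ∑ b, ∏ i, F b i (θ i) := by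
        refine integral_mono_of_nonneg (Filter.Eventually.of_forall fun θ => ?_)
          (integrable_finsetSum _ fun b _ => hFint b) (Filter.Eventually.of_forall fun θ => ?_)
        · exact mul_nonneg (hg _) (Finset.prod_nonneg fun i _ => hf i _)
        · obtain ⟨b, hb⟩ := exists_eq_ciSup_of_finite (f := θ)
          simp only [hF, ← hb]
          exact Finset.single_le_sum (f := fun b => g (θ b) * ∏ i, f i (θ i))
            (fun i _ => mul_nonneg (hg _) (Finset.prod_nonneg fun i _ => hf i _))
            (Finset.mem_univ b)
    _ = ∑ i, ∫ x, g x * f i x := by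
        rw [integral_finsetSum _ fun b _ => hFint b]
        exact Finset.sum_congr rfl fun b _ => hFval b

/-- Lemma 3: bound on the prior-dependent complexity term in a K-armed Gaussian bandit with
independent Gaussian prior `N(μ₀, σ₀² I_K)`. -/
theorem complexity_term_bound (K : ℕ) (hK : 2 ≤ K) (σ₀ : ℝ) (hσ₀ : 0 < σ₀)
    (μ₀ : Fin K → ℝ) (h : Fin K → ℝ → ℝ)
    (hdef : ∀ a x, h a x = (2 * Real.pi * σ₀ ^ 2) ^ (-(1 : ℝ) / 2) *
      Real.exp (-(x - μ₀ a) ^ 2 / (2 * σ₀ ^ 2))) :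
    ∑ a : Fin K,
      ∫ θ : ({a' : Fin K // a' ≠ a} → ℝ),
        h a (⨆ a' : {a' : Fin K // a' ≠ a}, θ a') *
          ∏ a' : {a' : Fin K // a' ≠ a}, h a' (θ a')
    ≤ (1 / (2 * Real.sqrt (Real.pi * σ₀ ^ 2))) *
      ∑ a : Fin K, ∑ a' ∈ Finset.univ.filter (· ≠ a),
        Real.exp (-(μ₀ a - μ₀ a') ^ 2 / (4 * σ₀ ^ 2)) := by
  obtain ⟨v, hv⟩ : ∃ v : NNReal, (v : ℝ) = σ₀ ^ 2 := ⟨⟨σ₀ ^ 2, sq_nonneg _⟩, rfl⟩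
  have hv0 : 0 < v := by
    rw [← NNReal.coe_pos, hv]
    positivity
  have hh : ∀ a, h a = ProbabilityTheory.gaussianPDFReal (μ₀ a) v := by
    intro a
    funext x
    rw [hdef, ProbabilityTheory.gaussianPDFReal, hv, Real.sqrt_eq_rpow,
      ← Real.rpow_neg (by positivity)]
    norm_num
  have hv2 : v / 2 ≠ 0 := (half_pos hv0).ne'
  rw [Finset.mul_sum]
  refine Finset.sum_le_sum fun a _ => ?_
  have : Nontrivial (Fin K) := Fin.nontrivial_iff_two_le.mpr hK
  obtain ⟨c, hc⟩ := exists_ne a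
  have : Nonempty {a' : Fin K // a' ≠ a} := ⟨⟨c, hc⟩⟩
  simp only [hh]
  refine (integral_iSup_mul_prod_le (ProbabilityTheory.gaussianPDFReal (μ₀ a) v) (fun i : {a' : Fin K // a' ≠ a} =>
    ProbabilityTheory.gaussianPDFReal (μ₀ i) v)
    (fun x => ProbabilityTheory.gaussianPDFReal_nonneg _ _ _)
    (fun i x => ProbabilityTheory.gaussianPDFReal_nonneg _ _ _)
    (fun i => ProbabilityTheory.integrable_gaussianPDFReal _ _)
    (fun i => ProbabilityTheory.integral_gaussianPDFReal_eq_one _ hv0.ne') (fun i => ?_)).trans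
    (le_of_eq ?_)
  · simp only [gaussianPDFReal_mul_gaussianPDFReal _ _ v hv0]
    exact (ProbabilityTheory.integrable_gaussianPDFReal _ _).const_mul _
  · simp only [gaussianPDFReal_mul_gaussianPDFReal _ _ v hv0, integral_const_mul,
      ProbabilityTheory.integral_gaussianPDFReal_eq_one _ hv2, mul_one, hv]
    rw [Finset.mul_sum]
    exact (Finset.sum_subtype (Finset.univ.filter (· ≠ a)) (by simp)
      fun b => 1 / (2 * √(π * σ₀ ^ 2)) * rexp (-(μ₀ a - μ₀ b) ^ 2 / (4 * σ₀ ^ 2))).symm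
end

section
/- Let d ≥ 1 and n ≥ 1 be integers, σ > 0, L > 0, let Σ₀ be a symmetric positive definite real d×d matrix, and let A₁, …, A_n ∈ ℝ^d satisfy ‖A_t‖₂ ≤ L for all t. For each t ∈ {1,…,n} define G_t = σ^{−2} ∑_{ℓ=1}^{t−1} A_ℓ A_ℓᵀ and Σ̂_t = (Σ₀^{−1} + G_t)^{−1}, and let σ_{0,max}² = λ_max(Σ₀)·L², where λ_max(Σ₀) is the largest eigenvalue of Σ₀. Then ∑_{t=1}^{n} A_tᵀ Σ̂_t A_t ≤ (σ_{0,max}² · d / log(1 + σ_{0,max}²/σ²)) · log(1 + σ_{0,max}² n / (σ² d)). -/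
open Matrix Finset

/-!
Write `M = σ_{0,max}²`, `x_t = A_tᵀ Σ̂_t A_t` and `P_t = Σ₀⁻¹ + G_t`, so that `Σ̂_t = P_t⁻¹`.

* Adding a positive semidefinite matrix to `Σ₀⁻¹` only decreases the inverse, so
  `0 ≤ x_t ≤ A_tᵀ Σ₀ A_t ≤ λ_max(Σ₀) ‖A_t‖² ≤ M`
  (`dotProduct_inv_add_mulVec_le`, `dotProduct_mulVec_le_iSup_eigenvalues`).
* On `[0, M]` the concave function `x ↦ log (1 + x / σ²)` lies above its chord, so
  `x_t ≤ M / log (1 + M / σ²) * log (1 + x_t / σ²)` (`le_mul_log_one_add`).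
* Since `P_{t+1} = P_t + σ⁻² A_t A_tᵀ`, the matrix determinant lemma makes the sum of the
  `log (1 + x_t / σ²)` telescope to `log det P_{n+1} - log det Σ₀⁻¹` (`log_det_add_sum`).
* Factoring `Σ₀ = Bᵀ B`, this difference is `log det (1 + B G Bᵀ)` with `G = σ⁻² ∑ A_t A_tᵀ`.
  By concavity of `log` on the eigenvalues it is at most `d log (1 + M n / (σ² d))`, because the
  trace of `B G Bᵀ` is `σ⁻² ∑ A_tᵀ Σ₀ A_t ≤ M n / σ²` (`log_det_le`, `log_det_mul_le`).
-/

/-- Rayleigh bound: the quadratic form of a symmetric matrix is at most its largest eigenvalue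
times the squared norm. -/
lemma dotProduct_mulVec_le_iSup_eigenvalues {d : ℕ} {S : Matrix (Fin d) (Fin d) ℝ}
    (hS : S.IsHermitian) (a : Fin d → ℝ) :
    a ⬝ᵥ S *ᵥ a ≤ (⨆ i, hS.eigenvalues i) * (a ⬝ᵥ a) := by
  set l := ⨆ i, hS.eigenvalues i
  have hps : (algebraMap ℝ (Matrix (Fin d) (Fin d) ℝ) l - S).PosSemidef := by
    rw [posSemidef_iff_isHermitian_and_spectrum_nonneg]
    constructor
    · refine IsHermitian.sub ?_ hS
      rw [Algebra.algebraMap_eq_smul_one]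
      simp [IsHermitian]
    · rw [← spectrum.singleton_sub_eq, hS.spectrum_real_eq_range_eigenvalues]
      rintro x ⟨y, hy, z, ⟨i, rfl⟩, rfl⟩
      rw [Set.mem_singleton_iff] at hy
      subst hy
      have : hS.eigenvalues i ≤ l := le_ciSup (Set.finite_range _).bddAbove i
      simpa using this
  have h := hps.dotProduct_mulVec_nonneg a
  rw [Algebra.algebraMap_eq_smul_one] at h
  simp only [star_trivial, sub_mulVec, smul_mulVec, one_mulVec, dotProduct_sub, dotProduct_smul,
    smul_eq_mul] at h
  linarith

/-- Antitonicity of the inverse, in quadratic form: a positive semidefinite increment `Q` of the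
precision `S⁻¹` does not increase the variance. -/
lemma dotProduct_inv_add_mulVec_le {d : ℕ} {S Q : Matrix (Fin d) (Fin d) ℝ}
    (hS : S.PosDef) (hQ : Q.PosSemidef) (a : Fin d → ℝ) :
    a ⬝ᵥ (S⁻¹ + Q)⁻¹ *ᵥ a ≤ a ⬝ᵥ S *ᵥ a := by
  have hP : (S⁻¹ + Q).PosDef := hS.inv.add_posSemidef hQ
  set y := (S⁻¹ + Q)⁻¹ *ᵥ a with hy
  have ha : a = S⁻¹ *ᵥ y + Q *ᵥ y := by
    rw [← add_mulVec, hy, mulVec_mulVec, mul_nonsing_inv _ ((isUnit_iff_isUnit_det _).1 hP.isUnit),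
      one_mulVec]
  have hSS : S *ᵥ S⁻¹ *ᵥ y = y := by
    rw [mulVec_mulVec, mul_nonsing_inv _ ((isUnit_iff_isUnit_det _).1 hS.isUnit), one_mulVec]
  have hsymm : ∀ u v : Fin d → ℝ, u ⬝ᵥ S *ᵥ v = v ⬝ᵥ S *ᵥ u := by
    intro u v
    have hT : Sᵀ = S := by simpa [IsHermitian] using hS.isHermitian
    rw [dotProduct_mulVec, ← mulVec_transpose, hT, dotProduct_comm]
  have h1 := hQ.dotProduct_mulVec_nonneg y
  have h2 := hS.posSemidef.dotProduct_mulVec_nonneg (Q *ᵥ y)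
  simp only [star_trivial] at h1 h2
  -- With `a = S⁻¹ y + Q y`, the gap `aᵀ S a - aᵀ y` equals `yᵀ Q y + (Q y)ᵀ S (Q y)`.
  have e1 : a ⬝ᵥ S *ᵥ a = a ⬝ᵥ y + (y ⬝ᵥ Q *ᵥ y + (Q *ᵥ y) ⬝ᵥ S *ᵥ (Q *ᵥ y)) := by
    have e2 : a ⬝ᵥ S *ᵥ (Q *ᵥ y) = y ⬝ᵥ Q *ᵥ y + (Q *ᵥ y) ⬝ᵥ S *ᵥ (Q *ᵥ y) := by
      conv_lhs => rw [ha]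
      rw [add_dotProduct, hsymm (S⁻¹ *ᵥ y), hSS, dotProduct_comm (Q *ᵥ y) y]
    have e3 : S *ᵥ a = y + S *ᵥ (Q *ᵥ y) := by
      conv_lhs => rw [ha]
      rw [mulVec_add, hSS]
    rw [e3, dotProduct_add, e2]
  linarith

/-- The concave function `x ↦ log (1 + x / s)` lies above its chord on `[0, M]`. -/
lemma le_mul_log_one_add {M s x : ℝ} (hM : 0 < M) (hs : 0 < s) (hx0 : 0 ≤ x) (hxM : x ≤ M) :
    x ≤ M / Real.log (1 + M / s) * Real.log (1 + x / s) := by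
  have hMs : 0 < M / s := div_pos hM hs
  have hlog : 0 < Real.log (1 + M / s) := Real.log_pos (by linarith)
  have hc := strictConcaveOn_log_Ioi.concaveOn.2
    (show (1 : ℝ) ∈ Set.Ioi 0 by simp)
    (show 1 + M / s ∈ Set.Ioi 0 by simp only [Set.mem_Ioi]; linarith)
    (show 0 ≤ 1 - x / M by rw [sub_nonneg, div_le_one hM]; exact hxM)
    (show 0 ≤ x / M by positivity) (by ring)
  have he : (1 - x / M) • (1 : ℝ) + (x / M) • (1 + M / s) = 1 + x / s := by
    simp only [smul_eq_mul]; field_simp; ring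
  rw [he] at hc
  simp only [smul_eq_mul, Real.log_one, mul_zero, zero_add] at hc
  calc x = M / Real.log (1 + M / s) * (x / M * Real.log (1 + M / s)) := by
        have := hlog.ne'
        generalize Real.log (1 + M / s) = l at this
        field_simp
    _ ≤ _ := mul_le_mul_of_nonneg_left hc (by positivity)

/-- A form of the arithmetic-geometric mean inequality for the eigenvalues, proved by applying
`log u ≤ u - 1` to each eigenvalue divided by `m`. -/
lemma log_det_le {d : ℕ} {M : Matrix (Fin d) (Fin d) ℝ} (hM : M.PosDef) {m : ℝ} (hm : 0 < m)
    (htr : M.trace ≤ d * m) : Real.log M.det ≤ d * Real.log m := by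
  have hpos := hM.eigenvalues_pos
  have hdet : M.det = ∏ i, hM.isHermitian.eigenvalues i := by
    simpa using hM.isHermitian.det_eq_prod_eigenvalues
  have htrace : M.trace = ∑ i, hM.isHermitian.eigenvalues i := by
    simpa using hM.isHermitian.trace_eq_sum_eigenvalues
  rw [hdet, Real.log_prod (fun i _ => (hpos i).ne')]
  have hle : ∀ i ∈ (univ : Finset (Fin d)), Real.log (hM.isHermitian.eigenvalues i)
      ≤ Real.log m + (hM.isHermitian.eigenvalues i / m - 1) := by
    intro i _
    have := Real.log_le_sub_one_of_pos (div_pos (hpos i) hm)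
    rw [Real.log_div (hpos i).ne' hm.ne'] at this
    linarith
  refine (sum_le_sum hle).trans ?_
  rw [sum_add_distrib, sum_sub_distrib, ← sum_div, ← htrace]
  have : M.trace / m ≤ d := by rwa [div_le_iff₀ hm]
  simp only [sum_const, card_univ, Fintype.card_fin, nsmul_eq_mul]
  linarith

open scoped MatrixOrder in
/-- `S * (S⁻¹ + Q) = 1 + S * Q` has the determinant of the symmetric matrix `1 + B * Q * Bᵀ`, where
`S = Bᵀ * B`; this reduces the bound to `log_det_le`. -/
lemma log_det_mul_le {d : ℕ} {S Q : Matrix (Fin d) (Fin d) ℝ} (hS : S.PosDef)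
    (hQ : Q.PosSemidef) {r : ℝ} (hr : 0 ≤ r) (htr : (S * Q).trace ≤ d * r) :
    Real.log (S⁻¹ + Q).det - Real.log (S⁻¹).det ≤ d * Real.log (1 + r) := by
  obtain ⟨B, hB⟩ : ∃ B : Matrix (Fin d) (Fin d) ℝ, S = Bᴴ * B :=
    CStarAlgebra.nonneg_iff_eq_star_mul_self.mp hS.posSemidef.nonneg
  have hps : (B * Q * Bᴴ).PosSemidef := hQ.mul_mul_conjTranspose_same B
  have hpd : (1 + B * Q * Bᴴ).PosDef := PosDef.one.add_posSemidef hps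
  have hPdet := (hS.inv.add_posSemidef hQ).det_pos
  have hu := (isUnit_iff_isUnit_det _).1 hS.isUnit
  have hdet : (1 + B * Q * Bᴴ).det = S.det * (S⁻¹ + Q).det := by
    rw [← det_mul, mul_add, mul_nonsing_inv _ hu, hB, Matrix.mul_assoc Bᴴ B Q,
      det_one_add_mul_comm Bᴴ]
  have htr' : (1 + B * Q * Bᴴ).trace ≤ d * (1 + r) := by
    rw [trace_add, trace_one, Fintype.card_fin, trace_mul_comm, ← Matrix.mul_assoc, ← hB]
    linarith
  have h := log_det_le hpd (by linarith : 0 < 1 + r) htr'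
  rw [hdet, Real.log_mul hS.det_pos.ne' hPdet.ne'] at h
  have hinv : Real.log (S⁻¹).det = - Real.log S.det := by
    rw [det_nonsing_inv, Ring.inverse_eq_inv', Real.log_inv]
  linarith

lemma posSemidef_smul_sum_vecMulVec {d : ℕ} {ι : Type*} {c : ℝ} (hc : 0 ≤ c)
    (s : Finset ι) (a : ι → Fin d → ℝ) :
    (c • ∑ i ∈ s, vecMulVec (a i) (a i)).PosSemidef := by
  refine PosSemidef.smul (posSemidef_sum s fun i _ => ?_) hc
  simpa using posSemidef_vecMulVec_self_star (a i)

/-- The log-determinants of the precision matrices telescope, by the matrix determinant lemma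
`det (P + c a aᵀ) = det P * (1 + c aᵀ P⁻¹ a)`. -/
lemma log_det_add_sum {d : ℕ} {P : Matrix (Fin d) (Fin d) ℝ} (hP : P.PosDef) {c : ℝ} (hc : 0 ≤ c)
    (a : ℕ → Fin d → ℝ) (n : ℕ) :
    ∑ t ∈ range n, Real.log (1 + c * (a t ⬝ᵥ
        (P + c • ∑ i ∈ range t, vecMulVec (a i) (a i))⁻¹ *ᵥ a t)) =
      Real.log (P + c • ∑ i ∈ range n, vecMulVec (a i) (a i)).det - Real.log P.det := by
  induction n with
  | zero => simp
  | succ n ih =>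
    rw [sum_range_succ, ih, sum_range_succ (fun i => vecMulVec (a i) (a i)), smul_add, ← add_assoc]
    set R := P + c • ∑ i ∈ range n, vecMulVec (a i) (a i)
    have hR : R.PosDef := hP.add_posSemidef (posSemidef_smul_sum_vecMulVec hc _ _)
    have hnn := hR.inv.posSemidef.dotProduct_mulVec_nonneg (a n)
    simp only [star_trivial] at hnn
    have hdet : (R + c • vecMulVec (a n) (a n)).det
        = R.det * (1 + c * (a n ⬝ᵥ R⁻¹ *ᵥ a n)) := by
      rw [← smul_vecMulVec, vecMulVec_eq Unit, det_add_replicateCol_mul_replicateRow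
        ((isUnit_iff_isUnit_det _).1 hR.isUnit), det_unique (n := Unit), Matrix.add_apply, one_apply_eq,
        Matrix.mul_assoc, ← replicateCol_mulVec, mulVec_smul]
      simp [mul_apply, dotProduct, mul_sum, mul_left_comm]
    have : 0 ≤ c * (a n ⬝ᵥ R⁻¹ *ᵥ a n) := mul_nonneg hc hnn
    rw [hdet, Real.log_mul hR.det_pos.ne' (by linarith)]
    ring

/-- Lemma 10: the elliptic potential bound on the sum of posterior variances of linear
BayesUCB with prior covariance `Σ₀` and noise variance `σ²`. Here `lmax` is the largest
eigenvalue of `Σ₀` and `σ_{0,max}² = lmax · L²`. -/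
theorem sum_posterior_variances_le (d n : ℕ) (hd : 1 ≤ d) (hn : 1 ≤ n)
    (σ L : ℝ) (hσ : 0 < σ) (hL : 0 < L)
    (S₀ : Matrix (Fin d) (Fin d) ℝ) (hS₀ : S₀.PosDef)
    (A : Fin n → Fin d → ℝ) (hA : ∀ t, Real.sqrt (A t ⬝ᵥ A t) ≤ L)
    (G : Fin n → Matrix (Fin d) (Fin d) ℝ)
    (hG : ∀ t, G t = (σ ^ 2)⁻¹ •
      ∑ ℓ ∈ Finset.univ.filter (fun ℓ => ℓ < t), vecMulVec (A ℓ) (A ℓ))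
    (Shat : Fin n → Matrix (Fin d) (Fin d) ℝ)
    (hShat : ∀ t, Shat t = (S₀⁻¹ + G t)⁻¹)
    (lmax : ℝ) (hlmax : lmax = ⨆ i, hS₀.isHermitian.eigenvalues i)
    (σ0max2 : ℝ) (hσ0max2 : σ0max2 = lmax * L ^ 2) :
    ∑ t : Fin n, A t ⬝ᵥ (Shat t) *ᵥ A t
      ≤ (σ0max2 * d / Real.log (1 + σ0max2 / σ ^ 2)) *
        Real.log (1 + σ0max2 * n / (σ ^ 2 * d)) := by
  set s := σ ^ 2 with hs_def
  have hs : 0 < s := by positivity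
  have hc : 0 ≤ s⁻¹ := by positivity
  have hdpos : (0 : ℝ) < d := by exact_mod_cast hd
  have hlpos : 0 < lmax := by
    rw [hlmax]
    exact (hS₀.eigenvalues_pos ⟨0, hd⟩).trans_le
      (le_ciSup (Set.finite_range hS₀.isHermitian.eigenvalues).bddAbove _)
  have hM : 0 < σ0max2 := by rw [hσ0max2]; positivity
  have hAS : ∀ t, A t ⬝ᵥ S₀ *ᵥ A t ≤ σ0max2 := by
    intro t
    have h1 := dotProduct_mulVec_le_iSup_eigenvalues hS₀.isHermitian (A t)
    rw [← hlmax] at h1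
    have h2 : A t ⬝ᵥ A t ≤ L ^ 2 := (Real.sqrt_le_left hL.le).1 (hA t)
    rw [hσ0max2]
    exact h1.trans (mul_le_mul_of_nonneg_left h2 hlpos.le)
  have hGps : ∀ t, (G t).PosSemidef := fun t => by
    rw [hG]; exact posSemidef_smul_sum_vecMulVec hc _ _
  have hx0 : ∀ t, 0 ≤ A t ⬝ᵥ Shat t *ᵥ A t := by
    intro t
    rw [hShat]
    simpa using (hS₀.inv.add_posSemidef (hGps t)).inv.posSemidef.dotProduct_mulVec_nonneg (A t)
  have hxM : ∀ t, A t ⬝ᵥ Shat t *ᵥ A t ≤ σ0max2 := by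
    intro t
    rw [hShat]
    exact (dotProduct_inv_add_mulVec_le hS₀ (hGps t) (A t)).trans (hAS t)
  -- The actions extended by zero to all of `ℕ`, so that the telescoping can run by induction.
  let a : ℕ → Fin d → ℝ := fun k => if h : k < n then A ⟨k, h⟩ else 0
  have haA : ∀ t : Fin n, a t = A t := fun t => by simp [a]
  have hGa : ∀ t : Fin n, G t = s⁻¹ • ∑ i ∈ range t, vecMulVec (a i) (a i) := by
    intro t
    rw [hG, sum_filter]
    congr 1
    let g : ℕ → Matrix (Fin d) (Fin d) ℝ :=
      fun k => if k < (t : ℕ) then vecMulVec (a k) (a k) else 0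
    have h1 : ∀ ℓ : Fin n, (if ℓ < t then vecMulVec (A ℓ) (A ℓ) else 0) = g ℓ := by
      intro ℓ
      simp [g, haA]
    refine (sum_congr rfl fun ℓ _ => h1 ℓ).trans ((Fin.sum_univ_eq_sum_range g n).trans ?_)
    rw [← sum_filter]
    congr 1
    ext k
    have := t.isLt
    simp only [mem_filter, mem_range]
    omega
  have hsum : ∑ t : Fin n, Real.log (1 + (A t ⬝ᵥ Shat t *ᵥ A t) / s)
      ≤ d * Real.log (1 + σ0max2 * n / (s * d)) := by
    let g : ℕ → ℝ := fun k => Real.log (1 + s⁻¹ * (a k ⬝ᵥ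
      (S₀⁻¹ + s⁻¹ • ∑ i ∈ range k, vecMulVec (a i) (a i))⁻¹ *ᵥ a k))
    have h1 : ∀ t : Fin n, Real.log (1 + (A t ⬝ᵥ Shat t *ᵥ A t) / s) = g t := by
      intro t
      simp only [g, haA, hShat, hGa, div_eq_inv_mul]
    rw [(sum_congr rfl fun t _ => h1 t).trans (Fin.sum_univ_eq_sum_range g n),
      log_det_add_sum hS₀.inv hc]
    refine log_det_mul_le hS₀ (posSemidef_smul_sum_vecMulVec hc _ _) (by positivity) ?_
    rw [Matrix.mul_smul, Matrix.mul_sum, trace_smul, trace_sum, smul_eq_mul]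
    have h2 : ∑ i ∈ range n, (S₀ * vecMulVec (a i) (a i)).trace ≤ n * σ0max2 := by
      have : ∀ i ∈ range n, (S₀ * vecMulVec (a i) (a i)).trace ≤ σ0max2 := by
        intro i hi
        rw [mul_vecMulVec, trace_vecMulVec, dotProduct_comm]
        have := hAS ⟨i, mem_range.1 hi⟩
        rwa [← haA] at this
      simpa using sum_le_card_nsmul _ _ _ this
    calc _ ≤ s⁻¹ * (n * σ0max2) := mul_le_mul_of_nonneg_left h2 hc
      _ = _ := by field_simp
  have hlog : 0 < Real.log (1 + σ0max2 / s) := Real.log_pos (by have := div_pos hM hs; linarith)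
  calc ∑ t : Fin n, A t ⬝ᵥ Shat t *ᵥ A t
      ≤ ∑ t : Fin n, σ0max2 / Real.log (1 + σ0max2 / s)
          * Real.log (1 + (A t ⬝ᵥ Shat t *ᵥ A t) / s) :=
        sum_le_sum fun t _ => le_mul_log_one_add hM hs (hx0 t) (hxM t)
    _ = σ0max2 / Real.log (1 + σ0max2 / s)
          * ∑ t : Fin n, Real.log (1 + (A t ⬝ᵥ Shat t *ᵥ A t) / s) := by rw [mul_sum]
    _ ≤ σ0max2 / Real.log (1 + σ0max2 / s) * (d * Real.log (1 + σ0max2 * n / (s * d))) :=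
        mul_le_mul_of_nonneg_left hsum (by positivity)
    _ = _ := by ring
end
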